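/- arXiv:1811.01503 — 2 statements merged into one kernel-verified Lean document; each statement's English description precedes it below -/
import Mathlib

section
/- Let (α_n, β_n, γ_n)_{n≥0} be a stationary and ergodic sequence of triples of non-negative random variables. If E|log α₀| < ∞, E|log β₀| < ∞ and E log⁺ γ₀ < ∞, then almost surely limsup_{n→∞} (1/n) log(γ_n Σ_{k=0}^{n} α₀⋯α_{k−1} β_k⋯β_{n−1}) ≤ max{E log α₀, E log β₀} (where the product over an empty range equals 1). -/
/-!
By the pointwise ergodic theorem, `U_n = ∑_{i<n} log α_i` and `V_n = ∑_{i<n} log β_i` grow linearly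
with slopes `A = E log α₀` and `B = E log β₀`. Since `x ≤ exp (log x)` for `x ≥ 0` (also at `x = 0`,
where `Real.log 0 = 0`), the sum is at most `exp V_n * ∑_{k≤n} exp (U_k - V_k)`. The partial sums of
a sequence of exponential growth rate `A - B` have growth rate at most `max 0 (A - B)`, so this
product has growth rate at most `B + max 0 (A - B) = max A B`. The factor `γ_n ≤ exp (log⁺ γ_n)`
does not change the rate: `log⁺ γ_n` is an increment of a Birkhoff sum with linear growth, hence
`o(n)`.

For the ergodic theorem it suffices that the Birkhoff sums of an integrable function with negative
integral are almost surely bounded above: applied to `g - d` and `-g - d` this bounds the averages.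
Otherwise, by ergodicity, they would be unbounded above almost everywhere, and comparing the
successive running maxima of the sums would force the integral to be nonnegative.
-/

open MeasureTheory Filter
open scoped ENNReal Topology

noncomputable section

/-- `log⁺ x = max (log x) 0`. -/
def plog (x : ℝ) : ℝ := max (Real.log x) 0

section RunningMaximum

variable {α M : Type*} [AddCommMonoid M] [LinearOrder M]

/-- The running maximum `max_{0 ≤ k ≤ n} S_k g` of the Birkhoff sums of `g` along `f`, whose
unboundedness is the exceptional event in the proof of the pointwise ergodic theorem. The empty
sum `S_0 g = 0` takes part in the maximum. -/
def birkhoffMax (f : α → α) (g : α → M) (n : ℕ) (x : α) : M :=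
  partialSups (birkhoffSum f g · x) n

lemma birkhoffMax_nonneg (f : α → α) (g : α → M) (n : ℕ) (x : α) : 0 ≤ birkhoffMax f g n x :=
  (birkhoffSum_zero f g x).symm.trans_le (le_partialSups_of_le (birkhoffSum f g · x) n.zero_le)

lemma monotone_birkhoffMax (f : α → α) (g : α → M) (x : α) : Monotone (birkhoffMax f g · x) :=
  (partialSups (birkhoffSum f g · x)).monotone

lemma birkhoffMax_succ [IsOrderedAddMonoid M] (f : α → α) (g : α → M) (n : ℕ) (x : α) :
    birkhoffMax f g (n + 1) x = max 0 (g x + birkhoffMax f g n (f x)) := by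
  induction n with
  | zero =>
    rw [birkhoffMax, partialSups_add_one]
    simp [birkhoffMax]
  | succ n ih =>
    calc birkhoffMax f g (n + 2) x
        = max (birkhoffMax f g (n + 1) x) (birkhoffSum f g (n + 2) x) := partialSups_add_one _ _
      _ = max 0 (g x + max (birkhoffMax f g n (f x)) (birkhoffSum f g (n + 1) (f x))) := by
        rw [ih, birkhoffSum_succ', max_assoc, max_add_add_left]
      _ = max 0 (g x + birkhoffMax f g (n + 1) (f x)) := by
        rw [birkhoffMax, birkhoffMax, partialSups_add_one]

end RunningMaximum

section LinearOrderedGroup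

variable {α G : Type*} [AddCommGroup G] [LinearOrder G] [IsOrderedAddMonoid G]

lemma birkhoffMax_succ_sub_apply (f : α → α) (g : α → G) (n : ℕ) (x : α) :
    birkhoffMax f g (n + 1) x - birkhoffMax f g n (f x) =
      max (-birkhoffMax f g n (f x)) (g x) := by
  rw [birkhoffMax_succ, ← max_sub_sub_right, zero_sub, add_sub_cancel_right]

lemma bddAbove_range_birkhoffSum_apply_iff (f : α → α) (g : α → G) (x : α) :
    BddAbove (Set.range (birkhoffSum f g · (f x))) ↔
      BddAbove (Set.range (birkhoffSum f g · x)) := by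
  simp only [bddAbove_def, Set.forall_mem_range]
  constructor
  · rintro ⟨C, hC⟩
    refine ⟨max 0 (g x + C), fun n => ?_⟩
    cases n with
    | zero => exact (birkhoffSum_zero f g x).trans_le (le_max_left _ _)
    | succ n =>
      rw [birkhoffSum_succ']
      exact le_max_of_le_right (add_le_add_right (hC n) _)
  · rintro ⟨C, hC⟩
    refine ⟨C - g x, fun n => le_sub_iff_add_le'.mpr ?_⟩
    simpa only [birkhoffSum_succ'] using hC (n + 1)

end LinearOrderedGroup

lemma tendsto_inv_smul_iterate_of_tendsto_birkhoffAverage {α E : Type*} [AddCommGroup E]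
    [Module ℝ E] [TopologicalSpace E] [IsTopologicalAddGroup E] [ContinuousSMul ℝ E]
    {f : α → α} {g : α → E} {x : α} {l : E}
    (h : Tendsto (birkhoffAverage ℝ f g · x) atTop (𝓝 l)) :
    Tendsto (fun n : ℕ => (n : ℝ)⁻¹ • g (f^[n] x)) atTop (𝓝 0) := by
  have hratio : Tendsto (fun n : ℕ => 1 + (n : ℝ)⁻¹) atTop (𝓝 1) := by
    simpa using (tendsto_inv_atTop_nhds_zero_nat (𝕜 := ℝ)).const_add 1
  have hdiff : Tendsto (fun n : ℕ =>
      (1 + (n : ℝ)⁻¹) • birkhoffAverage ℝ f g (n + 1) x - birkhoffAverage ℝ f g n x)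
      atTop (𝓝 0) := by
    simpa using (hratio.smul ((tendsto_add_atTop_iff_nat 1).mpr h)).sub h
  refine hdiff.congr' ?_
  filter_upwards [eventually_ne_atTop 0] with n hn
  have hcoeff : (1 + (n : ℝ)⁻¹) * ((n + 1 : ℕ) : ℝ)⁻¹ = (n : ℝ)⁻¹ := by
    push_cast
    field_simp
  rw [birkhoffAverage, birkhoffAverage, smul_smul, hcoeff, ← smul_sub, birkhoffSum_succ,
    add_sub_cancel_left]

section PointwiseErgodicTheorem

variable {α : Type*} [MeasurableSpace α] {μ : Measure α} {f : α → α} {g : α → ℝ}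

lemma integrable_birkhoffMax (hf : MeasurePreserving f μ μ) (hg : Integrable g μ) (n : ℕ) :
    Integrable (birkhoffMax f g n) μ := by
  induction n with
  | zero =>
    have hzero : birkhoffMax f g 0 = 0 := funext fun x => by simp [birkhoffMax]
    exact hzero ▸ integrable_zero α ℝ μ
  | succ n ih =>
    simp only [funext (birkhoffMax_succ f g n)]
    exact (integrable_zero α ℝ μ).sup (hg.add (hf.integrable_comp_of_integrable ih))

lemma integral_max_neg_birkhoffMax_nonneg (hf : MeasurePreserving f μ μ) (hg : Integrable g μ)
    (n : ℕ) : 0 ≤ ∫ x, max (-birkhoffMax f g n (f x)) (g x) ∂μ := by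
  have hint := integrable_birkhoffMax hf hg n
  have hint_succ := integrable_birkhoffMax hf hg (n + 1)
  have hint_comp : Integrable (fun x => birkhoffMax f g n (f x)) μ :=
    hf.integrable_comp_of_integrable hint
  have hinv : ∫ x, birkhoffMax f g n (f x) ∂μ = ∫ x, birkhoffMax f g n x ∂μ := by
    rw [← integral_map hf.aemeasurable (hf.map_eq.symm ▸ hint.aestronglyMeasurable), hf.map_eq]
  simp_rw [← birkhoffMax_succ_sub_apply]
  rw [integral_sub hint_succ hint_comp, hinv, sub_nonneg]
  exact integral_mono hint hint_succ fun x => monotone_birkhoffMax f g x n.le_succ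

/-- With `M_n` the running maxima, the functions `M_{n+1} - M_n ∘ f = max (-M_n ∘ f) g` have
nonnegative integral because `M_n ≤ M_{n+1}` and `f` preserves `μ`; since `M_n → ∞`, they tend
to `g`. -/
lemma integral_nonneg_of_ae_not_bddAbove_birkhoffSum (hf : MeasurePreserving f μ μ)
    (hg : Integrable g μ) (h : ∀ᵐ x ∂μ, ¬BddAbove (Set.range (birkhoffSum f g · x))) :
    0 ≤ ∫ x, g x ∂μ := by
  refine ge_of_tendsto' (tendsto_integral_of_dominated_convergence (fun x => |g x|)
    (fun n => ?_) hg.abs (fun n => .of_forall fun x => ?_) ?_)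
    (integral_max_neg_birkhoffMax_nonneg hf hg)
  · exact ((hf.integrable_comp_of_integrable (integrable_birkhoffMax hf hg n)).neg.sup
      hg).aestronglyMeasurable
  · exact abs_le.mpr ⟨(neg_abs_le _).trans (le_max_right _ _), max_le
      ((neg_nonpos.mpr (birkhoffMax_nonneg f g n (f x))).trans (abs_nonneg _)) (le_abs_self _)⟩
  · filter_upwards [h] with x hx
    have hunbdd : ¬BddAbove (Set.range (birkhoffMax f g · (f x))) := by
      rwa [← bddAbove_range_birkhoffSum_apply_iff, ← bddAbove_range_partialSups] at hx
    have htop := tendsto_atTop_atTop_of_monotone' (monotone_birkhoffMax f g (f x)) hunbdd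
    refine tendsto_const_nhds.congr' ?_
    filter_upwards [htop.eventually_ge_atTop (-g x)] with n hn
    exact (max_eq_right (neg_le.mp hn)).symm

lemma nullMeasurableSet_bddAbove_range_birkhoffSum
    (hf : Measure.QuasiMeasurePreserving f μ μ) (hg : AEMeasurable g μ) :
    NullMeasurableSet {x | BddAbove (Set.range (birkhoffSum f g · x))} μ := by
  have hmeas : MeasurableSet {x | BddAbove (Set.range (birkhoffSum f (hg.mk g) · x))} :=
    measurableSet_bddAbove_range fun n =>
      Finset.measurable_fun_sum _ fun k _ => hg.measurable_mk.comp (hf.measurable.iterate k)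
  refine hmeas.nullMeasurableSet.congr ?_
  filter_upwards [ae_all_iff.mpr (hf.birkhoffSum_ae_eq_of_ae_eq hg.ae_eq_mk)] with x hx
  exact congrArg (fun s : ℕ → ℝ => BddAbove (Set.range s)) (funext fun n => (hx n).symm)

lemma ae_bddAbove_range_birkhoffSum (hf : Ergodic f μ) (hg : Integrable g μ)
    (hneg : ∫ x, g x ∂μ < 0) : ∀ᵐ x ∂μ, BddAbove (Set.range (birkhoffSum f g · x)) := by
  have hnull := nullMeasurableSet_bddAbove_range_birkhoffSum
    hf.toMeasurePreserving.quasiMeasurePreserving hg.aemeasurable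
  have hinv : f ⁻¹' {x | BddAbove (Set.range (birkhoffSum f g · x))} =
      {x | BddAbove (Set.range (birkhoffSum f g · x))} :=
    Set.ext (bddAbove_range_birkhoffSum_apply_iff f g)
  refine (hf.quasiErgodic.ae_mem_or_ae_notMem₀ hnull hinv.eventuallyEq).resolve_right fun h => ?_
  exact hneg.not_ge (integral_nonneg_of_ae_not_bddAbove_birkhoffSum hf.toMeasurePreserving hg h)

variable [IsFiniteMeasure μ]

lemma ae_eventually_birkhoffAverage_lt (hf : Ergodic f μ) (hg : Integrable g μ) {c : ℝ}
    (hc : ⨍ x, g x ∂μ < c) : ∀ᵐ x ∂μ, ∀ᶠ n in atTop, birkhoffAverage ℝ f g n x < c := by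
  rcases eq_zero_or_neZero μ with rfl | _
  · exact ae_zero.symm ▸ eventually_bot
  obtain ⟨d, hd, hdc⟩ := exists_between hc
  have hneg : ∫ x, (g x - d) ∂μ < 0 := by
    rw [integral_sub hg (integrable_const d), ← integral_average μ g, integral_const,
      integral_const, ← smul_sub]
    exact smul_neg_of_pos_of_neg measureReal_univ_pos (sub_neg.mpr hd)
  filter_upwards [ae_bddAbove_range_birkhoffSum hf (hg.sub (integrable_const d)) hneg]
    with x ⟨C, hC⟩
  have hlim : Tendsto (fun n : ℕ => d + (n : ℝ)⁻¹ * C) atTop (𝓝 d) := by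
    simpa using ((tendsto_inv_atTop_nhds_zero_nat (𝕜 := ℝ)).mul_const C).const_add d
  filter_upwards [hlim.eventually_lt_const hdc, eventually_gt_atTop 0] with n hn hpos
  refine lt_of_le_of_lt ?_ hn
  have hsum : birkhoffSum f g n x ≤ n * d + C := by
    have := hC (Set.mem_range_self n)
    simp only [birkhoffSum, Pi.sub_apply, Finset.sum_sub_distrib, Finset.sum_const,
      Finset.card_range, nsmul_eq_mul] at this ⊢
    linarith
  calc birkhoffAverage ℝ f g n x ≤ (n : ℝ)⁻¹ * (n * d + C) :=
        mul_le_mul_of_nonneg_left hsum (by positivity)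
    _ = d + (n : ℝ)⁻¹ * C := by field_simp

theorem ae_tendsto_birkhoffAverage (hf : Ergodic f μ) (hg : Integrable g μ) :
    ∀ᵐ x ∂μ, Tendsto (birkhoffAverage ℝ f g · x) atTop (𝓝 (⨍ x, g x ∂μ)) := by
  have hupper : ∀ᵐ x ∂μ, ∀ q : ℚ, ⨍ x, g x ∂μ < q →
      ∀ᶠ n in atTop, birkhoffAverage ℝ f g n x < q :=
    ae_all_iff.mpr fun q => eventually_imp_distrib_left.mpr
      fun hq => ae_eventually_birkhoffAverage_lt hf hg hq
  have hlower : ∀ᵐ x ∂μ, ∀ q : ℚ, q < ⨍ x, g x ∂μ →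
      ∀ᶠ n in atTop, q < birkhoffAverage ℝ f g n x := by
    refine ae_all_iff.mpr fun q => eventually_imp_distrib_left.mpr fun hq => ?_
    have hneg : ⨍ x, (-g) x ∂μ < -q := by simpa [average_neg] using hq
    simpa [birkhoffAverage_neg] using ae_eventually_birkhoffAverage_lt hf hg.neg hneg
  filter_upwards [hupper, hlower] with x hux hlx
  refine tendsto_order.mpr ⟨fun c hc => ?_, fun c hc => ?_⟩
  · obtain ⟨q, hcq, hq⟩ := exists_rat_btwn hc
    exact (hlx q hq).mono fun _ => hcq.trans
  · obtain ⟨q, hq, hqc⟩ := exists_rat_btwn hc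
    exact (hux q hq).mono fun _ h => h.trans hqc

end PointwiseErgodicTheorem

section ExponentialGrowth

open ExpGrowth

lemma limsup_inv_mul_log_eq_expGrowthSup (x : ℕ → ℝ≥0∞) :
    limsup (fun n : ℕ => (((n : ℝ)⁻¹ : ℝ) : EReal) * ENNReal.log (x n)) atTop =
      expGrowthSup x := by
  simp only [expGrowthSup, div_eq_mul_inv, mul_comm, EReal.coe_inv, EReal.coe_natCast]

lemma expGrowthSup_exp_of_tendsto {s : ℕ → ℝ} {c : ℝ}
    (hs : Tendsto (fun n : ℕ => (n : ℝ)⁻¹ * s n) atTop (𝓝 c)) :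
    expGrowthSup (fun n => EReal.exp (s n)) = c := by
  refine (((continuous_coe_real_ereal.tendsto c).comp hs).congr fun n => ?_).limsup_eq
  rw [Function.comp_apply, EReal.log_exp, mul_comm, ← div_eq_mul_inv]
  norm_cast

lemma expGrowthSup_exp_mul_le_of_tendsto {s : ℕ → ℝ} {c : ℝ}
    (hs : Tendsto (fun n : ℕ => (n : ℝ)⁻¹ * s n) atTop (𝓝 c)) (v : ℕ → ℝ≥0∞) :
    expGrowthSup (fun n => EReal.exp (s n) * v n) ≤ c + expGrowthSup v := by
  have hexp := expGrowthSup_exp_of_tendsto hs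
  exact hexp ▸ expGrowthSup_mul_le (.inl (hexp ▸ EReal.coe_ne_bot c))
    (.inl (hexp ▸ EReal.coe_ne_top c))

lemma tendsto_inv_mul_log_natCast_add_one :
    Tendsto (fun n : ℕ => (n : ℝ)⁻¹ * Real.log (n + 1)) atTop (𝓝 0) := by
  have hlog : Tendsto (fun n : ℕ => Real.log (n + 1) / ((n : ℝ) + 1)) atTop (𝓝 0) :=
    Real.isLittleO_log_id_atTop.tendsto_div_nhds_zero.comp
      (tendsto_atTop_add_const_right _ _ tendsto_natCast_atTop_atTop)
  have hratio : Tendsto (fun n : ℕ => 1 + (n : ℝ)⁻¹) atTop (𝓝 1) := by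
    simpa using (tendsto_inv_atTop_nhds_zero_nat (𝕜 := ℝ)).const_add 1
  have hmul := hlog.mul hratio
  rw [zero_mul] at hmul
  refine hmul.congr' ?_
  filter_upwards [eventually_ne_atTop 0] with n hn
  field_simp

lemma expGrowthSup_natCast_add_one : expGrowthSup (fun n => (n : ℝ≥0∞) + 1) = 0 := by
  rw [← EReal.coe_zero, ← expGrowthSup_exp_of_tendsto tendsto_inv_mul_log_natCast_add_one]
  congr 1 with n
  rw [EReal.exp_coe, Real.exp_log (by positivity), ENNReal.ofReal_add (by positivity) zero_le_one,
    ENNReal.ofReal_natCast, ENNReal.ofReal_one]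

lemma expGrowthSup_sum_range_succ_le {u : ℕ → ℝ≥0∞} (hu : ∀ n, u n ≠ ∞) :
    expGrowthSup (fun n => ∑ k ∈ Finset.range (n + 1), u k) ≤ max 0 (expGrowthSup u) := by
  refine le_of_forall_gt_imp_ge_of_dense fun c hc => ?_
  obtain ⟨hc0, hcu⟩ := max_lt_iff.mp hc
  obtain ⟨N, hN⟩ := eventually_atTop.mp (eventually_le_exp hcu)
  set K : ℝ≥0∞ := 1 + ∑ k ∈ Finset.range N, u k
  have hK : K ≠ ∞ := by simp [K, ENNReal.sum_eq_top, hu]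
  have hterm (k : ℕ) : u k ≤ K * EReal.exp (c * k) := by
    rcases lt_or_ge k N with hk | hk
    · calc u k ≤ ∑ k ∈ Finset.range N, u k :=
            Finset.single_le_sum_of_canonicallyOrdered (Finset.mem_range.mpr hk)
        _ ≤ K := le_add_self
        _ ≤ K * EReal.exp (c * k) :=
            le_mul_of_one_le_right' (EReal.one_le_exp_iff.mpr (by positivity))
    · exact (hN k hk).trans (le_mul_of_one_le_left' le_self_add)
  have hsum (n : ℕ) :
      ∑ k ∈ Finset.range (n + 1), u k ≤ K * ((n + 1) * EReal.exp (c * n)) := by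
    calc ∑ k ∈ Finset.range (n + 1), u k
        ≤ ∑ _ ∈ Finset.range (n + 1), K * EReal.exp (c * n) := by
          gcongr with k hk
          refine (hterm k).trans ?_
          gcongr
          exact Finset.mem_range_succ_iff.mp hk
      _ = K * ((n + 1) * EReal.exp (c * n)) := by
          simp [mul_left_comm]
  calc expGrowthSup (fun n => ∑ k ∈ Finset.range (n + 1), u k)
      ≤ expGrowthSup ((fun n : ℕ => (n : ℝ≥0∞) + 1) * fun n : ℕ => EReal.exp (c * n)) :=
        expGrowthSup_le_of_eventually_le hK (.of_forall hsum)
    _ ≤ expGrowthSup (fun n : ℕ => (n : ℝ≥0∞) + 1) + expGrowthSup fun n : ℕ => EReal.exp (c * n) :=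
        expGrowthSup_mul_le (by simp [expGrowthSup_natCast_add_one])
          (by simp [expGrowthSup_natCast_add_one])
    _ = c := by rw [expGrowthSup_natCast_add_one, expGrowthSup_exp, zero_add]

lemma expGrowthSup_exp_mul_sum_exp_le {s t : ℕ → ℝ} {A B : ℝ}
    (hs : Tendsto (fun n : ℕ => (n : ℝ)⁻¹ * s n) atTop (𝓝 A))
    (ht : Tendsto (fun n : ℕ => (n : ℝ)⁻¹ * t n) atTop (𝓝 B)) :
    expGrowthSup (fun n => EReal.exp (t n) *
      ∑ k ∈ Finset.range (n + 1), EReal.exp ((s k - t k : ℝ) : EReal)) ≤ (max A B : ℝ) := by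
  have hst : expGrowthSup (fun n => EReal.exp ((s n - t n : ℝ) : EReal)) = (A - B : ℝ) :=
    expGrowthSup_exp_of_tendsto (by simpa only [mul_sub] using hs.sub ht)
  calc expGrowthSup (fun n => EReal.exp (t n) *
        ∑ k ∈ Finset.range (n + 1), EReal.exp ((s k - t k : ℝ) : EReal))
      ≤ B + expGrowthSup fun n => ∑ k ∈ Finset.range (n + 1),
          EReal.exp ((s k - t k : ℝ) : EReal) := expGrowthSup_exp_mul_le_of_tendsto ht _
    _ ≤ B + max 0 ((A - B : ℝ) : EReal) := by
        rw [← hst]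
        gcongr
        exact expGrowthSup_sum_range_succ_le fun n => ENNReal.ofReal_ne_top
    _ = (max A B : ℝ) := by
        rw [← EReal.coe_zero, ← EReal.coe_strictMono.monotone.map_max, ← EReal.coe_add,
          ← max_add_add_left, add_zero, add_sub_cancel, max_comm]

end ExponentialGrowth

section WeightedSums

open ExpGrowth

lemma enorm_le_exp_plog_norm {E : Type*} [SeminormedAddGroup E] (x : E) :
    ‖x‖ₑ ≤ EReal.exp (plog ‖x‖) := by
  rw [← ofReal_norm, EReal.exp_coe]
  exact ENNReal.ofReal_le_ofReal
    ((Real.le_exp_log ‖x‖).trans (Real.exp_le_exp.mpr (le_max_left _ _)))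

lemma enorm_mul_le_mul_enorm {R : Type*} [NonUnitalSeminormedRing R] (x y : R) :
    ‖x * y‖ₑ ≤ ‖x‖ₑ * ‖y‖ₑ := by
  simpa only [enorm_eq_nnnorm, ← ENNReal.coe_mul, ENNReal.coe_le_coe] using nnnorm_mul_le x y

variable {R : Type*} [NormedCommRing R] [NormOneClass R]

lemma enorm_prod_le_exp_sum_log_norm {ι : Type*} (s : Finset ι) (u : ι → R) :
    ‖∏ i ∈ s, u i‖ₑ ≤ EReal.exp (∑ i ∈ s, Real.log ‖u i‖ : ℝ) := by
  rw [← ofReal_norm, EReal.exp_coe, Real.exp_sum]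
  exact ENNReal.ofReal_le_ofReal ((s.norm_prod_le u).trans
    (Finset.prod_le_prod (fun i _ => norm_nonneg _) fun i _ => Real.le_exp_log _))

lemma enorm_sum_prod_mul_prod_le (u v : ℕ → R) (n : ℕ) :
    ‖∑ k ∈ Finset.range (n + 1), (∏ i ∈ Finset.range k, u i) * ∏ i ∈ Finset.Ico k n, v i‖ₑ ≤
      EReal.exp (∑ i ∈ Finset.range n, Real.log ‖v i‖ : ℝ) *
        ∑ k ∈ Finset.range (n + 1), EReal.exp ((∑ i ∈ Finset.range k, Real.log ‖u i‖ -
          ∑ i ∈ Finset.range k, Real.log ‖v i‖ : ℝ) : EReal) := by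
  rw [Finset.mul_sum]
  refine (enorm_sum_le _ _).trans (Finset.sum_le_sum fun k hk => ?_)
  refine (enorm_mul_le_mul_enorm _ _).trans ((mul_le_mul' (enorm_prod_le_exp_sum_log_norm _ u)
    (enorm_prod_le_exp_sum_log_norm _ v)).trans_eq ?_)
  rw [← EReal.exp_add, ← EReal.exp_add, ← EReal.coe_add, ← EReal.coe_add,
    Finset.sum_Ico_eq_sub _ (Finset.mem_range_succ_iff.mp hk)]
  congr 2
  ring

lemma expGrowthSup_enorm_mul_sum_prod_mul_prod_le {u v w : ℕ → R} {A B : ℝ}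
    (hu : Tendsto (fun n : ℕ => (n : ℝ)⁻¹ * ∑ i ∈ Finset.range n, Real.log ‖u i‖) atTop (𝓝 A))
    (hv : Tendsto (fun n : ℕ => (n : ℝ)⁻¹ * ∑ i ∈ Finset.range n, Real.log ‖v i‖) atTop (𝓝 B))
    (hw : Tendsto (fun n : ℕ => (n : ℝ)⁻¹ * plog ‖w n‖) atTop (𝓝 0)) :
    expGrowthSup (fun n => ‖w n * ∑ k ∈ Finset.range (n + 1),
      (∏ i ∈ Finset.range k, u i) * ∏ i ∈ Finset.Ico k n, v i‖ₑ) ≤ (max A B : ℝ) := by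
  set x : ℕ → ℝ≥0∞ := fun n => EReal.exp (∑ i ∈ Finset.range n, Real.log ‖v i‖ : ℝ) *
    ∑ k ∈ Finset.range (n + 1), EReal.exp ((∑ i ∈ Finset.range k, Real.log ‖u i‖ -
      ∑ i ∈ Finset.range k, Real.log ‖v i‖ : ℝ) : EReal)
  calc expGrowthSup (fun n => ‖w n * ∑ k ∈ Finset.range (n + 1),
        (∏ i ∈ Finset.range k, u i) * ∏ i ∈ Finset.Ico k n, v i‖ₑ)
      ≤ expGrowthSup fun n => EReal.exp (plog ‖w n‖) * x n :=
        expGrowthSup_monotone fun n => (enorm_mul_le_mul_enorm _ _).trans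
          (mul_le_mul' (enorm_le_exp_plog_norm (w n)) (enorm_sum_prod_mul_prod_le u v n))
    _ ≤ (0 : ℝ) + expGrowthSup x := expGrowthSup_exp_mul_le_of_tendsto hw x
    _ = expGrowthSup x := by rw [EReal.coe_zero, zero_add]
    _ ≤ (max A B : ℝ) := expGrowthSup_exp_mul_sum_exp_le hu hv

theorem limsup_log_weighted_sums_le_max_general {Ω : Type*} [MeasurableSpace Ω] {μ : Measure Ω}
    [IsFiniteMeasure μ] {T : Ω → Ω} (hT : Ergodic T μ) (a b g : Ω → R)
    (hia : Integrable (fun ω => Real.log ‖a ω‖) μ)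
    (hib : Integrable (fun ω => Real.log ‖b ω‖) μ)
    (hig : Integrable (fun ω => plog ‖g ω‖) μ) :
    ∀ᵐ ω ∂μ,
      limsup (fun n : ℕ =>
          (((n : ℝ)⁻¹ : ℝ) : EReal) * ENNReal.log
            ‖g (T^[n] ω) * ∑ k ∈ Finset.range (n + 1),
              (∏ i ∈ Finset.range k, a (T^[i] ω)) * ∏ i ∈ Finset.Ico k n, b (T^[i] ω)‖ₑ)
          atTop
        ≤ ((max (⨍ ω, Real.log ‖a ω‖ ∂μ) (⨍ ω, Real.log ‖b ω‖ ∂μ) : ℝ) : EReal) := by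
  filter_upwards [ae_tendsto_birkhoffAverage hT hia, ae_tendsto_birkhoffAverage hT hib,
    ae_tendsto_birkhoffAverage hT hig] with ω ha hb hg
  rw [limsup_inv_mul_log_eq_expGrowthSup]
  exact expGrowthSup_enorm_mul_sum_prod_mul_prod_le ha hb
    (tendsto_inv_smul_iterate_of_tendsto_birkhoffAverage hg)

end WeightedSums

/-- **Lemma (wh19, Lemma 2.1).**
Let `(α_n, β_n, γ_n)_{n ≥ 0}` be a stationary and ergodic sequence of triples of
non-negative random variables, realized as `(a, b, g) ∘ T^n` for an ergodic
measure-preserving transformation `T`.  If `E|log α₀| < ∞`, `E|log β₀| < ∞` and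
`E log⁺ γ₀ < ∞`, then almost surely
`limsup_n (1/n) log (γ_n ∑_{k=0}^{n} α₀⋯α_{k−1} β_k⋯β_{n−1}) ≤ max (E log α₀) (E log β₀)`
(the logarithm is taken in `[-∞,∞]`, i.e. `log 0 = -∞`). -/
theorem limsup_log_weighted_sums_le_max
    {Ω : Type*} [MeasurableSpace Ω] {μ : Measure Ω} [IsProbabilityMeasure μ]
    {T : Ω → Ω} (hT : Ergodic T μ)
    (a b g : Ω → ℝ) (hma : Measurable a) (hmb : Measurable b) (hmg : Measurable g)
    (ha : ∀ ω, 0 ≤ a ω) (hb : ∀ ω, 0 ≤ b ω) (hg : ∀ ω, 0 ≤ g ω)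
    (hia : Integrable (fun ω => Real.log (a ω)) μ)
    (hib : Integrable (fun ω => Real.log (b ω)) μ)
    (hig : Integrable (fun ω => plog (g ω)) μ) :
    ∀ᵐ ω ∂μ,
      Filter.limsup (fun n : ℕ =>
          (((n : ℝ)⁻¹ : ℝ) : EReal) * ENNReal.log (ENNReal.ofReal
            (g (T^[n] ω) * ∑ k ∈ Finset.range (n + 1),
              (∏ i ∈ Finset.range k, a (T^[i] ω)) *
                ∏ i ∈ Finset.Ico k n, b (T^[i] ω))))
          Filter.atTop
        ≤ ((max (∫ ω, Real.log (a ω) ∂μ) (∫ ω, Real.log (b ω) ∂μ) : ℝ) : EReal) := by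
  have hnonneg (n : ℕ) (ω : Ω) : 0 ≤ g (T^[n] ω) * ∑ k ∈ Finset.range (n + 1),
      (∏ i ∈ Finset.range k, a (T^[i] ω)) * ∏ i ∈ Finset.Ico k n, b (T^[i] ω) :=
    mul_nonneg (hg _) (Finset.sum_nonneg fun k _ => mul_nonneg
      (Finset.prod_nonneg fun i _ => ha _) (Finset.prod_nonneg fun i _ => hb _))
  simpa only [Real.enorm_of_nonneg (hnonneg _ _), Real.norm_of_nonneg (ha _),
    Real.norm_of_nonneg (hb _), average_eq_integral] using
    limsup_log_weighted_sums_le_max_general hT a b g (by simpa using hia) (by simpa using hib)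
      (by simpa [plog] using hig)

end
end

section
/- Let (α_n, β_n, γ_n)_{n≥0} be a stationary and ergodic sequence of triples of non-negative random variables with E|log α₀| < ∞, E|log β₀| < ∞ and E log⁺ γ₀ < ∞. (a) If max{E log α₀, E log β₀} < 0, then Σ_{n=0}^{∞} γ_n Σ_{k=0}^{n} α₀⋯α_{k−1} β_k⋯β_{n−1} < ∞ almost surely. (b) If E log α₀ < 0, then Σ_{n=0}^{∞} α₀⋯α_{n−1} γ_n < ∞ almost surely. -/
/-!
The heart of the matter is the upper half of the pointwise ergodic theorem: Birkhoff sums `S_n` of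
an integrable `f` with `∫ f < 0` are almost surely bounded above. Boundedness is a `T`-invariant
event, so by ergodicity it otherwise fails almost everywhere. Then the maxima
`M_n = max (S_0, …, S_n)` increase to `∞`, so `M_{n+1} - M_n ∘ T = max (-M_n ∘ T, f)` tends to `f`,
dominated by `|f|`, while its integral `∫ M_{n+1} - ∫ M_n` is nonnegative: this forces `∫ f ≥ 0`.

Applied to `f - c` and to `-f`, this bounds every orbit segment `f (T^k ω) + ⋯ + f (T^(n-1) ω)` by
`C + (∫ f) (n - k) + δ n` with a random constant `C`. Segments of `log ‖α‖` and `log ‖β‖` control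
the products, and segments of `log⁺ ‖γ‖` of length one control the weights. If both logarithmic
means are at most `c < 0`, every product `γ_n α₀⋯α_{k-1} β_k⋯β_{n-1}` is therefore at most
`exp (C + (c / 2) n)`, uniformly in `k ≤ n`.

The convention `Real.log 0 = 0` is harmless, since logarithms enter only through `x ≤ exp (log x)`.
-/

open MeasureTheory Filter
open scoped ENNReal Topology

noncomputable section

lemma plog_eq_posLog (x : ℝ) : plog x = Real.posLog x := max_comm _ _

lemma le_exp_posLog (x : ℝ) : x ≤ Real.exp (Real.posLog x) :=
  (Real.le_exp_log x).trans (Real.exp_le_exp.mpr (le_max_right _ _))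

section BirkhoffSum

variable {Ω : Type*} {T : Ω → Ω} {f : Ω → ℝ}

lemma bddAbove_range_birkhoffSum_apply_iff_s8 (ω : Ω) :
    BddAbove (Set.range fun n => birkhoffSum T f n (T ω)) ↔
      BddAbove (Set.range fun n => birkhoffSum T f n ω) := by
  constructor
  · rintro ⟨C, hC⟩
    refine ⟨max 0 (f ω + C), Set.forall_mem_range.mpr fun n => ?_⟩
    cases n with
    | zero => simp
    | succ n =>
      rw [birkhoffSum_succ']
      exact le_max_of_le_right (by gcongr; exact hC ⟨n, rfl⟩)
  · rintro ⟨C, hC⟩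
    refine ⟨C - f ω, Set.forall_mem_range.mpr fun n => ?_⟩
    rw [le_sub_iff_add_le', ← birkhoffSum_succ']
    exact hC ⟨n + 1, rfl⟩

lemma partialSups_birkhoffSum_nonneg (n : ℕ) (ω : Ω) : 0 ≤ partialSups (birkhoffSum T f) n ω :=
  le_partialSups_of_le (birkhoffSum T f) n.zero_le ω

lemma partialSups_birkhoffSum_succ (n : ℕ) (ω : Ω) :
    partialSups (birkhoffSum T f) (n + 1) ω =
      max 0 (f ω + partialSups (birkhoffSum T f) n (T ω)) := by
  simp only [Pi.partialSups_apply, partialSups_add_one', birkhoffSum_zero, Function.comp_def,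
    birkhoffSum_succ', partialSups_const_add, bot_eq_zero']

lemma partialSups_birkhoffSum_succ_sub (n : ℕ) (ω : Ω) :
    partialSups (birkhoffSum T f) (n + 1) ω - partialSups (birkhoffSum T f) n (T ω) =
      max (-partialSups (birkhoffSum T f) n (T ω)) (f ω) := by
  rw [partialSups_birkhoffSum_succ, ← max_sub_sub_right, zero_sub, add_sub_cancel_right]

lemma tendsto_max_neg_partialSups_birkhoffSum {ω : Ω}
    (hω : ¬BddAbove (Set.range fun n => birkhoffSum T f n ω)) :
    Tendsto (fun n => max (-partialSups (birkhoffSum T f) n (T ω)) (f ω)) atTop (𝓝 (f ω)) := by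
  have hM : Tendsto (fun n => partialSups (birkhoffSum T f) n (T ω)) atTop atTop := by
    simp only [Pi.partialSups_apply]
    refine tendsto_atTop_atTop_of_monotone' (partialSups_monotone _) ?_
    rwa [bddAbove_range_partialSups, bddAbove_range_birkhoffSum_apply_iff_s8]
  refine tendsto_const_nhds.congr' ?_
  filter_upwards [hM.eventually_ge_atTop (-f ω)] with n hn
  rw [max_eq_right (neg_le.mp hn)]

end BirkhoffSum

section MeasurePreserving

variable {Ω : Type*} [MeasurableSpace Ω] {μ : Measure Ω} {T : Ω → Ω} {f : Ω → ℝ}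

lemma integrable_birkhoffSum (hT : MeasurePreserving T μ μ) (hf : Integrable f μ) (n : ℕ) :
    Integrable (birkhoffSum T f n) μ :=
  integrable_finsetSum _ fun i _ => (hT.iterate i).integrable_comp_of_integrable hf

lemma integrable_partialSups_birkhoffSum (hT : MeasurePreserving T μ μ) (hf : Integrable f μ)
    (n : ℕ) : Integrable (partialSups (birkhoffSum T f) n) μ := by
  induction n with
  | zero => simpa only [partialSups_zero] using integrable_birkhoffSum hT hf 0
  | succ n ih =>
    rw [partialSups_add_one]
    exact ih.sup (integrable_birkhoffSum hT hf (n + 1))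

lemma nullMeasurableSet_bddAbove_birkhoffSum (hT : Measure.QuasiMeasurePreserving T μ μ)
    (hf : AEMeasurable f μ) :
    NullMeasurableSet {ω | BddAbove (Set.range fun n => birkhoffSum T f n ω)} μ := by
  have hunion : {ω | BddAbove (Set.range fun n => birkhoffSum T f n ω)} =
      ⋃ C : ℕ, ⋂ n : ℕ, {ω | birkhoffSum T f n ω ≤ C} := by
    ext ω
    simp only [Set.mem_ofPred_eq, Set.mem_iUnion, Set.mem_iInter]
    constructor
    · rintro ⟨C, hC⟩
      obtain ⟨N, hN⟩ := exists_nat_ge C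
      exact ⟨N, fun n => (hC ⟨n, rfl⟩).trans hN⟩
    · rintro ⟨C, hC⟩
      exact ⟨C, Set.forall_mem_range.mpr hC⟩
  have hmeas (n : ℕ) : AEMeasurable (birkhoffSum T f n) μ :=
    Finset.aemeasurable_fun_sum _ fun i _ => hf.comp_quasiMeasurePreserving (hT.iterate i)
  rw [hunion]
  exact .iUnion fun C => .iInter fun n =>
    nullMeasurableSet_le (hmeas n) aemeasurable_const

lemma integral_max_neg_partialSups_birkhoffSum_nonneg (hT : MeasurePreserving T μ μ)
    (hf : Integrable f μ) (n : ℕ) :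
    0 ≤ ∫ ω, max (-partialSups (birkhoffSum T f) n (T ω)) (f ω) ∂μ := by
  set M := partialSups (birkhoffSum T f)
  have hM : ∀ n, Integrable (M n) μ := integrable_partialSups_birkhoffSum hT hf
  have hMT_int : Integrable (fun ω => M n (T ω)) μ := hT.integrable_comp_of_integrable (hM n)
  have hMT_eq : ∫ ω, M n (T ω) ∂μ = ∫ ω, M n ω ∂μ := by
    rw [← integral_map hT.aemeasurable (by rw [hT.map_eq]; exact (hM n).aestronglyMeasurable),
      hT.map_eq]
  calc 0 ≤ ∫ ω, M (n + 1) ω ∂μ - ∫ ω, M n ω ∂μ :=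
        sub_nonneg.mpr (integral_mono (hM n) (hM (n + 1)) (M.monotone n.le_succ))
    _ = ∫ ω, (M (n + 1) ω - M n (T ω)) ∂μ := by
        rw [integral_sub (hM (n + 1)) hMT_int, hMT_eq]
    _ = ∫ ω, max (-M n (T ω)) (f ω) ∂μ := by
        simp only [M, partialSups_birkhoffSum_succ_sub]

lemma integral_nonneg_of_ae_not_bddAbove_birkhoffSum_s8 (hT : MeasurePreserving T μ μ)
    (hf : Integrable f μ)
    (hunbdd : ∀ᵐ ω ∂μ, ¬BddAbove (Set.range fun n => birkhoffSum T f n ω)) :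
    0 ≤ ∫ ω, f ω ∂μ := by
  refine ge_of_tendsto' (tendsto_integral_of_dominated_convergence (fun ω => |f ω|) (fun n => ?_)
    hf.abs (fun n => .of_forall fun ω => ?_)
    (hunbdd.mono fun _ => tendsto_max_neg_partialSups_birkhoffSum))
    (integral_max_neg_partialSups_birkhoffSum_nonneg hT hf)
  · exact ((hT.integrable_comp_of_integrable
      (integrable_partialSups_birkhoffSum hT hf n)).neg.sup hf).aestronglyMeasurable
  · have hM : -partialSups (birkhoffSum T f) n (T ω) ≤ 0 :=
      neg_nonpos.mpr (partialSups_birkhoffSum_nonneg n (T ω))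
    exact abs_le.mpr ⟨(neg_abs_le _).trans (le_max_right _ _),
      max_le (hM.trans (abs_nonneg _)) (le_abs_self _)⟩

end MeasurePreserving

section Ergodic

variable {Ω : Type*} [MeasurableSpace Ω] {μ : Measure Ω} {T : Ω → Ω} {f : Ω → ℝ}

lemma ae_bddAbove_birkhoffSum_of_integral_neg (hT : Ergodic T μ) (hf : Integrable f μ)
    (hneg : ∫ ω, f ω ∂μ < 0) :
    ∀ᵐ ω ∂μ, BddAbove (Set.range fun n => birkhoffSum T f n ω) := by
  have hmeas := nullMeasurableSet_bddAbove_birkhoffSum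
    hT.toMeasurePreserving.quasiMeasurePreserving hf.aemeasurable
  have hinv : T ⁻¹' {ω | BddAbove (Set.range fun n => birkhoffSum T f n ω)} =
      {ω | BddAbove (Set.range fun n => birkhoffSum T f n ω)} :=
    Set.ext bddAbove_range_birkhoffSum_apply_iff_s8
  refine (hT.quasiErgodic.ae_mem_or_ae_notMem₀ hmeas hinv.eventuallyEq).resolve_right
    fun hunbdd => hneg.not_ge ?_
  exact integral_nonneg_of_ae_not_bddAbove_birkhoffSum_s8 hT.toMeasurePreserving hf hunbdd

variable [IsProbabilityMeasure μ]

lemma ae_exists_birkhoffSum_le (hT : Ergodic T μ) (hf : Integrable f μ) {c : ℝ}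
    (hc : ∫ ω, f ω ∂μ < c) :
    ∀ᵐ ω ∂μ, ∃ C, ∀ n : ℕ, birkhoffSum T f n ω ≤ C + c * n := by
  have hneg : ∫ ω, (f ω - c) ∂μ < 0 := by
    simpa [integral_sub hf (integrable_const c)] using hc
  filter_upwards [ae_bddAbove_birkhoffSum_of_integral_neg hT (hf.sub (integrable_const c)) hneg]
    with ω ⟨C, hC⟩
  refine ⟨C, fun n => ?_⟩
  have hn : birkhoffSum T (fun ω => f ω - c) n ω ≤ C := hC ⟨n, rfl⟩
  simp only [birkhoffSum, Finset.sum_sub_distrib, Finset.sum_const, Finset.card_range,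
    nsmul_eq_mul] at hn ⊢
  linarith

lemma ae_exists_sum_Ico_iterate_le (hT : Ergodic T μ) (hf : Integrable f μ) {δ : ℝ}
    (hδ : 0 < δ) :
    ∀ᵐ ω ∂μ, ∃ C, ∀ k n : ℕ, k ≤ n →
      ∑ i ∈ Finset.Ico k n, f (T^[i] ω) ≤ C + (∫ ω, f ω ∂μ) * (n - k) + δ * n := by
  set m := ∫ ω, f ω ∂μ
  have hneg : ∫ ω, (-f) ω ∂μ < -m + δ / 2 := by
    simp only [Pi.neg_apply, integral_neg]
    linarith
  filter_upwards [ae_exists_birkhoffSum_le hT hf (c := m + δ / 2) (by linarith),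
    ae_exists_birkhoffSum_le hT hf.neg hneg] with ω ⟨C, hC⟩ ⟨D, hD⟩
  refine ⟨C + D, fun k n hkn => ?_⟩
  have hupper : birkhoffSum T f n ω ≤ C + (m + δ / 2) * n := hC n
  have hlower : -birkhoffSum T f k ω ≤ D + (-m + δ / 2) * k := by
    simpa only [birkhoffSum_neg] using hD k
  have hδkn : δ * k ≤ δ * n := by gcongr
  calc ∑ i ∈ Finset.Ico k n, f (T^[i] ω) = birkhoffSum T f n ω - birkhoffSum T f k ω :=
        Finset.sum_Ico_eq_sub _ hkn
    _ ≤ C + D + m * (n - k) + δ * n := by linarith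

lemma ae_exists_norm_iterate_le {E : Type*} [Norm E] {g : Ω → E} (hT : Ergodic T μ)
    (hg : Integrable (fun ω => Real.posLog ‖g ω‖) μ) {δ : ℝ} (hδ : 0 < δ) :
    ∀ᵐ ω ∂μ, ∃ C, ∀ n : ℕ, ‖g (T^[n] ω)‖ ≤ Real.exp (C + δ * n) := by
  filter_upwards [ae_exists_sum_Ico_iterate_le hT hg hδ] with ω ⟨C, hC⟩
  refine ⟨C + ∫ ω, Real.posLog ‖g ω‖ ∂μ + δ, fun n =>
    (le_exp_posLog _).trans (Real.exp_le_exp.mpr ?_)⟩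
  have hn := hC n (n + 1) n.le_succ
  rw [Nat.Ico_succ_singleton, Finset.sum_singleton] at hn
  push_cast at hn
  linarith

end Ergodic

lemma summable_succ_mul_exp (C : ℝ) {c : ℝ} (hc : c < 0) :
    Summable fun n : ℕ => ((n : ℝ) + 1) * Real.exp (C + c * n) := by
  have h₀ := Real.summable_pow_mul_exp_neg_nat_mul 0 (neg_pos.mpr hc)
  have h₁ := Real.summable_pow_mul_exp_neg_nat_mul 1 (neg_pos.mpr hc)
  refine ((h₁.add h₀).mul_left (Real.exp C)).congr fun n => ?_
  rw [Real.exp_add, neg_neg]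
  ring

section NormedRing

variable {R : Type*} [NormedCommRing R] [NormOneClass R]

lemma norm_prod_le_exp_sum_log {ι : Type*} (s : Finset ι) (x : ι → R) :
    ‖∏ i ∈ s, x i‖ ≤ Real.exp (∑ i ∈ s, Real.log ‖x i‖) := by
  rw [Real.exp_sum]
  exact (s.norm_prod_le x).trans
    (Finset.prod_le_prod (fun i _ => norm_nonneg _) fun i _ => Real.le_exp_log _)

variable {Ω : Type*} [MeasurableSpace Ω] {μ : Measure Ω} [IsProbabilityMeasure μ] {T : Ω → Ω}
  {a b g : Ω → R}

lemma ae_exists_norm_prod_Ico_iterate_le (hT : Ergodic T μ)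
    (ha : Integrable (fun ω => Real.log ‖a ω‖) μ) {c δ : ℝ}
    (hc : ∫ ω, Real.log ‖a ω‖ ∂μ ≤ c) (hδ : 0 < δ) :
    ∀ᵐ ω ∂μ, ∃ C, ∀ k n : ℕ, k ≤ n →
      ‖∏ i ∈ Finset.Ico k n, a (T^[i] ω)‖ ≤ Real.exp (C + c * (n - k) + δ * n) := by
  filter_upwards [ae_exists_sum_Ico_iterate_le hT ha hδ] with ω ⟨C, hC⟩
  refine ⟨C, fun k n hkn => (norm_prod_le_exp_sum_log _ _).trans (Real.exp_le_exp.mpr ?_)⟩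
  have hlength : (0 : ℝ) ≤ n - k := sub_nonneg.mpr (Nat.cast_le.mpr hkn)
  exact (hC k n hkn).trans (by gcongr)

lemma ae_exists_norm_weighted_prod_le (hT : Ergodic T μ)
    (ha : Integrable (fun ω => Real.log ‖a ω‖) μ)
    (hb : Integrable (fun ω => Real.log ‖b ω‖) μ)
    (hg : Integrable (fun ω => Real.posLog ‖g ω‖) μ) {c : ℝ} (hc : c < 0)
    (hac : ∫ ω, Real.log ‖a ω‖ ∂μ ≤ c) (hbc : ∫ ω, Real.log ‖b ω‖ ∂μ ≤ c) :
    ∀ᵐ ω ∂μ, ∃ C, ∀ k n : ℕ, k ≤ n →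
      ‖g (T^[n] ω) * ((∏ i ∈ Finset.range k, a (T^[i] ω)) * ∏ i ∈ Finset.Ico k n, b (T^[i] ω))‖ ≤
        Real.exp (C + c / 2 * n) := by
  -- Three errors of at most `δ * n` each leave half of the decay `6 * δ * n`.
  obtain ⟨δ, hδ, rfl⟩ : ∃ δ > 0, c = -(6 * δ) := ⟨-c / 6, by linarith, by ring⟩
  filter_upwards [ae_exists_norm_prod_Ico_iterate_le hT ha hac hδ,
    ae_exists_norm_prod_Ico_iterate_le hT hb hbc hδ, ae_exists_norm_iterate_le hT hg hδ]
    with ω ⟨A, hA⟩ ⟨B, hB⟩ ⟨G, hG⟩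
  refine ⟨G + A + B, fun k n hkn => ?_⟩
  have hAk := hA 0 k k.zero_le
  rw [Nat.Ico_zero_eq_range, Nat.cast_zero, sub_zero] at hAk
  have hδkn : δ * k ≤ δ * n := by gcongr
  calc _ ≤ ‖g (T^[n] ω)‖ * (‖∏ i ∈ Finset.range k, a (T^[i] ω)‖ *
          ‖∏ i ∈ Finset.Ico k n, b (T^[i] ω)‖) := by
        grw [norm_mul_le, norm_mul_le]
    _ ≤ Real.exp (G + δ * n) * (Real.exp (A + -(6 * δ) * k + δ * k) *
          Real.exp (B + -(6 * δ) * (n - k) + δ * n)) := by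
        gcongr
        exacts [hG n, hB k n hkn]
    _ ≤ Real.exp (G + A + B + -(6 * δ) / 2 * n) := by
        rw [← Real.exp_add, ← Real.exp_add, Real.exp_le_exp]
        linarith

theorem summable_weighted_sums_of_neg_log_means_general [CompleteSpace R] (hT : Ergodic T μ)
    (ha : Integrable (fun ω => Real.log ‖a ω‖) μ)
    (hb : Integrable (fun ω => Real.log ‖b ω‖) μ)
    (hg : Integrable (fun ω => Real.posLog ‖g ω‖) μ) :
    (max (∫ ω, Real.log ‖a ω‖ ∂μ) (∫ ω, Real.log ‖b ω‖ ∂μ) < 0 →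
      ∀ᵐ ω ∂μ, Summable (fun n : ℕ =>
        g (T^[n] ω) * ∑ k ∈ Finset.range (n + 1),
          (∏ i ∈ Finset.range k, a (T^[i] ω)) * ∏ i ∈ Finset.Ico k n, b (T^[i] ω)))
    ∧ ((∫ ω, Real.log ‖a ω‖ ∂μ) < 0 →
      ∀ᵐ ω ∂μ, Summable (fun n : ℕ =>
        (∏ i ∈ Finset.range n, a (T^[i] ω)) * g (T^[n] ω))) := by
  constructor
  · intro hneg
    set c := max (∫ ω, Real.log ‖a ω‖ ∂μ) (∫ ω, Real.log ‖b ω‖ ∂μ)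
    filter_upwards [ae_exists_norm_weighted_prod_le hT ha hb hg hneg (le_max_left _ _)
      (le_max_right _ _)] with ω ⟨C, hC⟩
    refine .of_norm_bounded (summable_succ_mul_exp C (c := c / 2) (by linarith)) fun n => ?_
    rw [Finset.mul_sum]
    refine (norm_sum_le_of_le _ fun k hk => hC k n (Finset.mem_range_succ_iff.mp hk)).trans_eq ?_
    simp only [Finset.sum_const, Finset.card_range, nsmul_eq_mul, Nat.cast_add_one]
  · intro hneg
    set c := ∫ ω, Real.log ‖a ω‖ ∂μ
    filter_upwards [ae_exists_norm_weighted_prod_le hT ha ha hg hneg le_rfl le_rfl]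
      with ω ⟨C, hC⟩
    refine .of_norm_bounded (summable_succ_mul_exp C (c := c / 2) (by linarith)) fun n => ?_
    calc ‖(∏ i ∈ Finset.range n, a (T^[i] ω)) * g (T^[n] ω)‖ ≤ Real.exp (C + c / 2 * n) := by
          rw [mul_comm]
          simpa only [Finset.Ico_self, Finset.prod_empty, mul_one] using hC n n le_rfl
      _ ≤ (n + 1) * Real.exp (C + c / 2 * n) :=
          le_mul_of_one_le_left (Real.exp_nonneg _) (by simp)

end NormedRing

/-- **Corollary 2.6.**
Let `(α_n, β_n, γ_n)_{n ≥ 0}` be a stationary and ergodic sequence of triples of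
non-negative random variables, realized as `(a, b, g) ∘ T^n` for an ergodic
measure-preserving transformation `T`, with `E|log α₀| < ∞`, `E|log β₀| < ∞` and
`E log⁺ γ₀ < ∞`.
(a) If `max (E log α₀) (E log β₀) < 0`, then
`∑_{n=0}^∞ γ_n ∑_{k=0}^{n} α₀⋯α_{k−1} β_k⋯β_{n−1} < ∞` almost surely.
(b) If `E log α₀ < 0`, then `∑_{n=0}^∞ α₀⋯α_{n−1} γ_n < ∞` almost surely. -/
theorem summable_weighted_sums_of_neg_log_means
    {Ω : Type*} [MeasurableSpace Ω] {μ : Measure Ω} [IsProbabilityMeasure μ]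
    {T : Ω → Ω} (hT : Ergodic T μ)
    (a b g : Ω → ℝ) (hma : Measurable a) (hmb : Measurable b) (hmg : Measurable g)
    (ha : ∀ ω, 0 ≤ a ω) (hb : ∀ ω, 0 ≤ b ω) (hg : ∀ ω, 0 ≤ g ω)
    (hia : Integrable (fun ω => Real.log (a ω)) μ)
    (hib : Integrable (fun ω => Real.log (b ω)) μ)
    (hig : Integrable (fun ω => plog (g ω)) μ) :
    (max (∫ ω, Real.log (a ω) ∂μ) (∫ ω, Real.log (b ω) ∂μ) < 0 →
      ∀ᵐ ω ∂μ, Summable (fun n : ℕ =>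
        g (T^[n] ω) * ∑ k ∈ Finset.range (n + 1),
          (∏ i ∈ Finset.range k, a (T^[i] ω)) * ∏ i ∈ Finset.Ico k n, b (T^[i] ω)))
    ∧ ((∫ ω, Real.log (a ω) ∂μ) < 0 →
      ∀ᵐ ω ∂μ, Summable (fun n : ℕ =>
        (∏ i ∈ Finset.range n, a (T^[i] ω)) * g (T^[n] ω))) := by
  simpa only [Real.norm_eq_abs, Real.log_abs, Real.posLog_abs] using
    summable_weighted_sums_of_neg_log_means_general (a := a) (b := b) hT
      (by simpa using hia) (by simpa using hib) (by simpa [plog_eq_posLog] using hig)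

end
end
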